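/- Let D be a positive squarefree integer, let b be an integer with gcd(b,D)=1, and let a : ℕ≥1 → ℂ with a(1)=1 split polynomially at every prime p dividing D. Then for every positive integer n one has a(n)·e(-bn/D) = (1/φ(D)) · Σ_{χ (mod D)} Σ_{m | (D/f_χ)*, m | n} B_m · f(χ,m,b) · χ*(n/m) · a(n/m), where the outer sum runs over all Dirichlet characters χ modulo D, the inner sum over the common positive divisors m of (D/f_χ)* = Π_{p | (D/f_χ)} p^{∂_p} and of n, and f(χ,m,b) = μ(D/f_χ) · conj(τ(χ*)) · conj(χ*(D/f_χ)) · χ*(bm) · r(m). -/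

import Mathlib

/-!
Let `N = b * n`. Orthogonality of characters modulo `D`, evaluated at the residue class `1`, writes
`e(N/D)` as the mean over `χ` of the Gauss sums `∑_{x mod D} χ(x) e(xN/D)` (`e_eq_sum_characters`).
For `D` squarefree and `g = D / f_χ`, such a Gauss sum is `τ(χ*) χ*(g) conj(χ*(N)) c_g(N)`, where
`c_g(N) = μ(g) ∏_{p ∣ g, p ∣ N} (1 - p)` is a Ramanujan sum (`sum_range_character`): Möbius
inversion over the condition `(x, g) = 1` reduces this to separability of Gauss sums of primitive
characters.

On the other side, `χ*(bm) χ*(n/m) = χ*(bn)` does not depend on `m`, so what remains is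
`∑_{m ∣ g*, m ∣ n} B_m r(m) a(n/m)`. It factors over the primes `p ∣ g`. With `k = v_p(n) ≥ 1` the
local factor is `a(p^k) + p ∑_{ℓ ≥ 1} A_ℓ(p) a(p^{k-ℓ}) = (1 - p) a(p^k)` by the recursion, and for
`k = 0` it is `1`. Hence the sum is `a(n) ∏_{p ∣ g, p ∣ n} (1 - p)` (`global_sum`), which is the same
product since `b` is prime to `D`.
-/

/-- `e x = exp(2πix)`. -/
noncomputable def e (x : ℝ) : ℂ := Complex.exp (2 * Real.pi * Complex.I * x)

/-- The Gauss sum `τ(ψ) = ∑_{b mod N} ψ(b) e(b/N)` of a Dirichlet character `ψ (mod N)`. -/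
noncomputable def gaussSumOf {N : ℕ} (ψ : DirichletCharacter ℂ N) : ℂ :=
  ∑ b ∈ Finset.range N, ψ (b : ZMod N) * e ((b : ℝ) / N)

/-- The radical `r(m)` of a positive integer. -/
def rad (m : ℕ) : ℕ := ∏ p ∈ m.primeFactors, p

/-- The data `(∂, A)` witnesses that the sequence `a` splits polynomially at the prime `p`. -/
def SplitsPolynomiallyAt (a : ℕ → ℂ) (dd : ℕ → ℕ) (A : ℕ → ℕ → ℂ) (p : ℕ) : Prop :=
  (∀ k n : ℕ, ¬ p ∣ n → a (p ^ k * n) = a (p ^ k) * a n) ∧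
  A p 0 = 1 ∧ A p (dd p) ≠ 0 ∧
  (∀ k : ℕ, 1 ≤ k → ∑ ℓ ∈ Finset.range (min k (dd p) + 1), A p ℓ * a (p ^ (k - ℓ)) = 0)

/-- `B m = ∏_{p^ℓ ∥ m} A_ℓ(p)`. -/
noncomputable def Bcoef (A : ℕ → ℕ → ℂ) (m : ℕ) : ℂ :=
  ∏ p ∈ m.primeFactors, A p (m.factorization p)

/-- `N* = ∏_{p | N} p^{∂_p}`. -/
def Dstar (N : ℕ) (dd : ℕ → ℕ) : ℕ := ∏ p ∈ N.primeFactors, p ^ dd p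

/-- `f(χ,m,b) = μ(D/f_χ) conj(τ(χ*)) conj(χ*(D/f_χ)) χ*(bm) r(m)`. -/
noncomputable def fChi {D : ℕ} (χ : DirichletCharacter ℂ D) (m : ℕ) (b : ℤ) : ℂ :=
  (ArithmeticFunction.moebius (D / χ.conductor) : ℂ) *
    (starRingEnd ℂ) (gaussSumOf χ.primitiveCharacter) *
    (starRingEnd ℂ) (χ.primitiveCharacter (((D / χ.conductor : ℕ) : ZMod χ.conductor))) *
    χ.primitiveCharacter ((b * m : ℤ) : ZMod χ.conductor) *
    (rad m : ℂ)

/-! ### Gauss sums of imprimitive characters -/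

theorem e_add (x y : ℝ) : e (x + y) = e x * e y := by
  unfold e
  rw [← Complex.exp_add]
  push_cast
  ring_nf

theorem conj_e (x : ℝ) : (starRingEnd ℂ) (e x) = e (-x) := by
  unfold e
  rw [← Complex.exp_conj]
  simp [Complex.conj_ofNat]

theorem e_div_eq_stdAddChar {N : ℕ} [NeZero N] (j : ℤ) :
    e ((j : ℝ) / N) = ZMod.stdAddChar (j : ZMod N) := by
  rw [ZMod.stdAddChar_coe]
  unfold e
  push_cast
  ring_nf

theorem sum_zmod_eq_sum_range {N : ℕ} [NeZero N] (F : ZMod N → ℂ) :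
    ∑ x : ZMod N, F x = ∑ x ∈ Finset.range N, F (x : ZMod N) := by
  obtain ⟨M, rfl⟩ := Nat.exists_eq_succ_of_ne_zero (NeZero.ne N)
  rw [Finset.sum_range]
  refine Fintype.sum_congr _ _ fun x => ?_
  congr 1
  exact (Fin.cast_val_eq_self x).symm

theorem sum_range_e {h : ℕ} (hh : 0 < h) (N : ℤ) :
    ∑ t ∈ Finset.range h, e ((t : ℝ) * N / h) = if (h : ℤ) ∣ N then (h : ℂ) else 0 := by
  have : NeZero h := ⟨hh.ne'⟩
  have := AddChar.sum_mulShift (N : ZMod h) (ZMod.isPrimitive_stdAddChar h)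
  rw [sum_zmod_eq_sum_range] at this
  simp only [ZMod.card, ZMod.intCast_zmod_eq_zero_iff_dvd] at this
  push_cast at this
  rw [← this]
  refine Finset.sum_congr rfl fun t _ => ?_
  have := e_div_eq_stdAddChar (N := h) (t * N)
  push_cast at this
  exact this

/-- Separability of the Gauss sum of a primitive character: `M` is arbitrary, in particular not
assumed prime to `f`, and both sides vanish when it is not. -/
theorem sum_range_primitive {f : ℕ} (hf : 0 < f) (ψ : DirichletCharacter ℂ f)
    (hψ : ψ.IsPrimitive) (M : ℤ) :
    ∑ x ∈ Finset.range f, ψ (x : ZMod f) * e ((x : ℝ) * M / f) =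
      (starRingEnd ℂ) (ψ (M : ZMod f)) * gaussSumOf ψ := by
  have : NeZero f := ⟨hf.ne'⟩
  have key := gaussSum_mulShift_of_isPrimitive (ZMod.stdAddChar (N := f)) hψ (M : ZMod f)
  have h1 : gaussSumOf ψ = gaussSum ψ (ZMod.stdAddChar (N := f)) := by
    unfold gaussSumOf gaussSum
    rw [sum_zmod_eq_sum_range]
    refine Finset.sum_congr rfl fun x _ => ?_
    have := e_div_eq_stdAddChar (N := f) x
    push_cast at this
    rw [this]
  rw [h1, ← MulChar.star_apply'] at *
  rw [starRingEnd_apply, ← key]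
  unfold gaussSum
  rw [sum_zmod_eq_sum_range]
  refine Finset.sum_congr rfl fun x _ => ?_
  have := e_div_eq_stdAddChar (N := f) (x * M)
  push_cast at this
  rw [this, AddChar.mulShift_apply, mul_comm (M : ZMod f)]

theorem sum_range_mul_eq (f h : ℕ) (F : ℕ → ℂ) :
    ∑ y ∈ Finset.range (f * h), F y =
      ∑ t ∈ Finset.range h, ∑ x ∈ Finset.range f, F (x + f * t) := by
  induction h with
  | zero => simp
  | succ h ih =>
    rw [Nat.mul_succ, Finset.sum_range_add, ih, Finset.sum_range_succ]
    simp [add_comm]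

/-- A primitive character mod `f`, summed against an additive character mod `f * h`: writing
`y = x + f * t`, the sum over `t` detects `h ∣ N`, and the sum over `x` is a Gauss sum mod `f`. -/
theorem sum_range_primitive_mul {f h : ℕ} (hf : 0 < f) (hh : 0 < h)
    (ψ : DirichletCharacter ℂ f) (hψ : ψ.IsPrimitive) (N : ℤ) :
    ∑ y ∈ Finset.range (f * h), ψ (y : ZMod f) * e ((y : ℝ) * N / (f * h : ℕ)) =
      if (h : ℤ) ∣ N then
        h * ((starRingEnd ℂ) (ψ ((N / h : ℤ) : ZMod f)) * gaussSumOf ψ) else 0 := by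
  have hf' : (f : ℝ) ≠ 0 := by positivity
  have hh' : (h : ℝ) ≠ 0 := by positivity
  rw [sum_range_mul_eq]
  have h1 : ∀ t ∈ Finset.range h, ∑ x ∈ Finset.range f,
      ψ ((x + f * t : ℕ) : ZMod f) * e (((x + f * t : ℕ) : ℝ) * N / (f * h : ℕ)) =
      e ((t : ℝ) * N / h) *
        ∑ x ∈ Finset.range f, ψ (x : ZMod f) * e ((x : ℝ) * N / (f * h : ℕ)) := by
    intro t _
    rw [Finset.mul_sum]
    refine Finset.sum_congr rfl fun x _ => ?_
    have : ((x + f * t : ℕ) : ℝ) * N / (f * h : ℕ) =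
        (t : ℝ) * N / h + (x : ℝ) * N / (f * h : ℕ) := by
      push_cast
      field_simp
      ring
    rw [this, e_add]
    simp
    ring
  rw [Finset.sum_congr rfl h1, ← Finset.sum_mul, sum_range_e hh]
  split_ifs with hd
  · obtain ⟨M, rfl⟩ := hd
    rw [Int.mul_ediv_cancel_left _ (by exact_mod_cast hh.ne'), ← sum_range_primitive hf ψ hψ]
    congr 1
    refine Finset.sum_congr rfl fun x _ => ?_
    congr 2
    push_cast
    field_simp
  · simp

theorem moebius_coprime_indicator (x : ℕ) {g : ℕ} (hg : 0 < g) :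
    (if x.Coprime g then (1 : ℂ) else 0) =
      ∑ d ∈ g.divisors, if d ∣ x then (ArithmeticFunction.moebius d : ℂ) else 0 := by
  rw [← Finset.sum_filter]
  have h1 : g.divisors.filter (· ∣ x) = (x.gcd g).divisors := by
    ext d
    simp only [Finset.mem_filter, Nat.mem_divisors, Nat.dvd_gcd_iff]
    constructor
    · rintro ⟨⟨h1, h2⟩, h3⟩
      exact ⟨⟨h3, h1⟩, (Nat.gcd_pos_of_pos_right _ hg).ne'⟩
    · rintro ⟨⟨h1, h2⟩, h3⟩
      exact ⟨⟨h2, hg.ne'⟩, h1⟩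
  rw [h1, ← Int.cast_sum, ← ArithmeticFunction.coe_mul_zeta_apply,
    ArithmeticFunction.moebius_mul_coe_zeta, ArithmeticFunction.one_apply]
  unfold Nat.Coprime
  split_ifs <;> simp

/-- Möbius inversion of the condition `(x, g) = 1`, with the multiples `x = d * y` of each divisor
`d ∣ g` reparametrised by `y`. -/
theorem sum_range_coprime (f : ℕ) {g : ℕ} (hg : 0 < g) (G : ℕ → ℂ) :
    ∑ x ∈ Finset.range (f * g), (if x.Coprime g then G x else 0) =
      ∑ d ∈ g.divisors, (ArithmeticFunction.moebius d : ℂ) *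
        ∑ y ∈ Finset.range (f * (g / d)), G (d * y) := by
  have h1 : ∀ x ∈ Finset.range (f * g), (if x.Coprime g then G x else 0) =
      ∑ d ∈ g.divisors,
        if d ∣ x then (ArithmeticFunction.moebius d : ℂ) * G x else 0 := by
    intro x _
    have := congrArg (· * G x) (moebius_coprime_indicator x hg)
    simp only [Finset.sum_mul, ite_mul, one_mul, zero_mul] at this
    exact this
  rw [Finset.sum_congr rfl h1, Finset.sum_comm]
  refine Finset.sum_congr rfl fun d hd => ?_
  obtain ⟨⟨h, rfl⟩, -⟩ := Nat.mem_divisors.1 hd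
  have hd0 : 0 < d := Nat.pos_of_mem_divisors hd
  rw [← Finset.sum_filter, ← Finset.mul_sum, Nat.mul_div_cancel_left _ hd0]
  congr 1
  symm
  refine Finset.sum_nbij (d * ·) ?_ ?_ ?_ ?_
  · intro y hy
    simp only [Finset.mem_range, Finset.mem_filter, dvd_mul_right, and_true] at hy ⊢
    calc d * y < d * (f * h) := Nat.mul_lt_mul_of_pos_left hy hd0
      _ = f * (d * h) := by ring
  · intro y _ z _ hyz
    exact Nat.eq_of_mul_eq_mul_left hd0 hyz
  · intro x hx
    simp only [Finset.coe_filter, Finset.mem_range, Set.mem_ofPred_eq] at hx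
    obtain ⟨hx, y, rfl⟩ := hx
    refine ⟨y, ?_, rfl⟩
    simp only [Finset.coe_range, Set.mem_Iio]
    refine Nat.lt_of_mul_lt_mul_left (a := d) ?_
    calc d * y < f * (d * h) := hx
      _ = d * (f * h) := by ring
  · intro _ _
    rfl

/-- `χ` agrees with `χ*` on integers prime to the cofactor `g = D / f_χ` and vanishes elsewhere. -/
theorem character_apply_eq {D f g : ℕ} (hfg : D = f * g) (χ : DirichletCharacter ℂ D)
    (hf : χ.conductor = f) (x : ℕ) :
    χ (x : ZMod D) = if x.Coprime g then χ.primitiveCharacter (x : ZMod χ.conductor) else 0 := by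
  by_cases h : x.Coprime D
  · have h2 : x.Coprime g := Nat.Coprime.coprime_dvd_right (Dvd.intro_left f hfg.symm) h
    rw [if_pos h2]
    have := χ.primitiveCharacter_apply_of_isCoprime (a := x) (Nat.isCoprime_iff_coprime.2 h)
    push_cast at this
    exact this.symm
  · rw [MulChar.map_nonunit _ (by rwa [ZMod.isUnit_iff_coprime])]
    split_ifs with h2
    · rw [MulChar.map_nonunit]
      rw [ZMod.isUnit_iff_coprime, hf]
      intro h3
      apply h
      rw [hfg]
      exact Nat.Coprime.mul_right h3 h2
    · rfl

/-- The Gauss sum of a possibly imprimitive character modulo a squarefree `D`. With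
`g = D / f_χ`, the factor `μ(g) ∏_{p ∣ (g, N)} (1 - p)` is the Ramanujan sum `c_g(N)`; it arises
as `∑_{h ∣ (g, N)} μ(g / h) h` from Möbius inversion. -/
theorem sum_range_character {D : ℕ} (hD : 0 < D) (hsq : Squarefree D)
    (χ : DirichletCharacter ℂ D) (N : ℤ) :
    ∑ x ∈ Finset.range D, χ (x : ZMod D) * e ((x : ℝ) * N / D) =
      gaussSumOf χ.primitiveCharacter *
        χ.primitiveCharacter ((D / χ.conductor : ℕ) : ZMod χ.conductor) *
        (starRingEnd ℂ) (χ.primitiveCharacter (N : ZMod χ.conductor)) *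
        (ArithmeticFunction.moebius (D / χ.conductor) : ℂ) *
        ∏ p ∈ (D / χ.conductor).primeFactors, (if (p : ℤ) ∣ N then (1 - p : ℂ) else 1) := by
  obtain ⟨g, hg⟩ := χ.conductor_dvd_level
  have hf : 0 < χ.conductor := Nat.pos_of_dvd_of_pos χ.conductor_dvd_level hD
  have hDg : D / χ.conductor = g := Nat.div_eq_of_eq_mul_right hf hg
  have hg0 : 0 < g := Nat.pos_of_ne_zero (by rintro rfl; omega)
  have hgsq : Squarefree g := hsq.squarefree_of_dvd (Dvd.intro_left _ hg.symm)
  have hcop : χ.conductor.Coprime g := Nat.coprime_of_squarefree_mul (hg ▸ hsq)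
  rw [hDg]
  generalize hψ : χ.primitiveCharacter = ψ
  have hprim : ψ.IsPrimitive := hψ ▸ χ.primitiveCharacter_isPrimitive
  have hsum : ∑ x ∈ Finset.range D, χ (x : ZMod D) * e ((x : ℝ) * N / D) =
      ∑ x ∈ Finset.range (χ.conductor * g), (if x.Coprime g then
        ψ (x : ZMod χ.conductor) * e ((x : ℝ) * N / (χ.conductor * g : ℕ)) else 0) := by
    rw [← hg]
    refine Finset.sum_congr rfl fun x _ => ?_
    rw [character_apply_eq hg χ rfl x, hψ]
    split_ifs <;> simp
  rw [hsum, sum_range_coprime _ hg0]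
  have hterm : ∀ d ∈ g.divisors, (ArithmeticFunction.moebius d : ℂ) *
      ∑ y ∈ Finset.range (χ.conductor * (g / d)), ψ ((d * y : ℕ) : ZMod χ.conductor) *
        e (((d * y : ℕ) : ℝ) * N / (χ.conductor * g : ℕ)) =
      gaussSumOf ψ * ψ (g : ZMod χ.conductor) * (starRingEnd ℂ) (ψ (N : ZMod χ.conductor)) *
        (ArithmeticFunction.moebius g : ℂ) * (if ((g / d : ℕ) : ℤ) ∣ N then
          (ArithmeticFunction.moebius (g / d) : ℂ) * (g / d : ℕ) else 0) := by
    intro d hd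
    obtain ⟨⟨h, rfl⟩, -⟩ := Nat.mem_divisors.1 hd
    have hd0 : 0 < d := Nat.pos_of_mem_divisors hd
    have hh0 : 0 < h := Nat.pos_of_mul_pos_left hg0
    rw [Nat.mul_div_cancel_left _ hd0]
    have h1 := sum_range_primitive_mul hf hh0 ψ hprim N
    have h2 : ∑ y ∈ Finset.range (χ.conductor * h), ψ ((d * y : ℕ) : ZMod χ.conductor) *
        e (((d * y : ℕ) : ℝ) * N / (χ.conductor * (d * h) : ℕ)) =
        ψ (d : ZMod χ.conductor) * ∑ y ∈ Finset.range (χ.conductor * h),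
          ψ (y : ZMod χ.conductor) * e ((y : ℝ) * N / (χ.conductor * h : ℕ)) := by
      rw [Finset.mul_sum]
      refine Finset.sum_congr rfl fun y _ => ?_
      have hd' : (d : ℝ) ≠ 0 := by positivity
      have : ((d * y : ℕ) : ℝ) * N / (χ.conductor * (d * h) : ℕ) =
          (y : ℝ) * N / (χ.conductor * h : ℕ) := by
        push_cast
        field_simp
      rw [this]
      push_cast
      rw [map_mul]
      ring
    rw [h2, h1]
    split_ifs with hdiv
    · obtain ⟨M, rfl⟩ := hdiv
      have hdh : d.Coprime h := Nat.coprime_of_squarefree_mul hgsq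
      rw [Int.mul_ediv_cancel_left _ (by exact_mod_cast hh0.ne'),
        ArithmeticFunction.isMultiplicative_moebius.map_mul_of_coprime hdh]
      have hm : (ArithmeticFunction.moebius h : ℂ) * ArithmeticFunction.moebius h = 1 := by
        have := ArithmeticFunction.moebius_sq_eq_one_of_squarefree
          (hgsq.squarefree_of_dvd (Dvd.intro_left d rfl))
        rw [← Int.cast_mul, ← sq, this, Int.cast_one]
      -- `h` is prime to the conductor, so `ψ h` has modulus one
      have hu : ψ (h : ZMod χ.conductor) * (starRingEnd ℂ) (ψ (h : ZMod χ.conductor)) = 1 := by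
        have hunit : IsUnit (h : ZMod χ.conductor) := by
          rw [ZMod.isUnit_iff_coprime]
          exact (Nat.Coprime.coprime_dvd_right (Dvd.intro_left d rfl) hcop).symm
        rw [starRingEnd_apply, MulChar.star_apply', ← MulChar.mul_apply, mul_inv_cancel,
          MulChar.one_apply hunit]
      push_cast
      simp only [map_mul]
      linear_combination (-(ψ d * ArithmeticFunction.moebius d * h *
        gaussSumOf ψ * (starRingEnd ℂ) (ψ (M : ZMod χ.conductor)))) *
        ((ArithmeticFunction.moebius h : ℂ) * ArithmeticFunction.moebius h * hu + hm)
    · simp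
  rw [Finset.sum_congr rfl hterm, ← Finset.mul_sum]
  congr 1
  rw [Nat.sum_div_divisors g fun h => if (h : ℤ) ∣ N then
    (ArithmeticFunction.moebius h : ℂ) * (h : ℂ) else 0]
  rw [← Finset.prod_filter, ← Finset.sum_filter]
  have hG0 : g.gcd N.natAbs ≠ 0 := (Nat.gcd_pos_of_pos_left _ hg0).ne'
  have h1 : g.divisors.filter (fun h : ℕ => (h : ℤ) ∣ N) = (g.gcd N.natAbs).divisors := by
    ext d
    simp only [Finset.mem_filter, Nat.mem_divisors, Nat.dvd_gcd_iff, Int.natCast_dvd, ne_eq, hG0, hg0.ne']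
    tauto
  have h2 : g.primeFactors.filter (fun h : ℕ => (h : ℤ) ∣ N) = (g.gcd N.natAbs).primeFactors := by
    ext d
    simp only [Finset.mem_filter, Nat.mem_primeFactors, Nat.dvd_gcd_iff, Int.natCast_dvd, ne_eq, hG0, hg0.ne']
    tauto
  rw [h1, h2]
  have hmul : ((ArithmeticFunction.id : ArithmeticFunction ℕ) :
      ArithmeticFunction ℂ).IsMultiplicative := ArithmeticFunction.isMultiplicative_id.natCast
  have := ArithmeticFunction.IsMultiplicative.prodPrimeFactors_one_sub_of_squarefree _ hmul
    (hgsq.squarefree_of_dvd (Nat.gcd_dvd_left g N.natAbs))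
  simpa using this.symm

/-- Fourier inversion on `(ℤ/D)ˣ`, evaluated at the unit `1`. -/
theorem e_eq_sum_characters {D : ℕ} (hD : 0 < D) (N : ℤ) :
    e ((N : ℝ) / D) = (D.totient : ℂ)⁻¹ * ∑ χ : DirichletCharacter ℂ D,
      ∑ x ∈ Finset.range D, χ (x : ZMod D) * e ((x : ℝ) * N / D) := by
  have : NeZero D := ⟨hD.ne'⟩
  have h0 : (D.totient : ℂ) ≠ 0 := by exact_mod_cast (Nat.totient_pos.2 hD).ne'
  have h1 : ∀ χ : DirichletCharacter ℂ D,
      ∑ x ∈ Finset.range D, χ (x : ZMod D) * e ((x : ℝ) * N / D) =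
      ∑ x : ZMod D, χ x * ZMod.stdAddChar (x * (N : ZMod D)) := by
    intro χ
    rw [sum_zmod_eq_sum_range]
    refine Finset.sum_congr rfl fun x _ => ?_
    have := e_div_eq_stdAddChar (N := D) (x * N)
    push_cast at this
    rw [this]
  simp_rw [h1]
  rw [Finset.sum_comm]
  simp_rw [← Finset.sum_mul, DirichletCharacter.sum_characters_eq ℂ, ite_mul, zero_mul]
  rw [Finset.sum_ite_eq' Finset.univ (1 : ZMod D), if_pos (Finset.mem_univ _), one_mul,
    inv_mul_cancel_left₀ h0, e_div_eq_stdAddChar]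

/-! ### The divisor sum weighted by the radical -/

/-- The one-prime case. Writing `N = p ^ k * u` with `p ∤ u`, all terms with `ℓ ≥ 1` carry the
weight `r(p ^ ℓ) = p`, and for `k ≥ 1` the recursion gives them the total `-p * a N`. -/
theorem local_sum {a : ℕ → ℂ} (ha1 : a 1 = 1) {dd : ℕ → ℕ} {A : ℕ → ℕ → ℂ} {p : ℕ}
    (hp : p.Prime) (hs : SplitsPolynomiallyAt a dd A p) {N : ℕ} (hN : 0 < N) :
    ∑ ℓ ∈ Finset.range (dd p + 1), (if p ^ ℓ ∣ N then
        A p ℓ * (rad (p ^ ℓ) : ℂ) * a (N / p ^ ℓ) else 0) =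
      (if p ∣ N then (1 - p : ℂ) else 1) * a N := by
  obtain ⟨hmul, hA0, -, hrec⟩ := hs
  obtain ⟨k, u, hu, rfl⟩ := Nat.exists_eq_pow_mul_and_not_dvd hN.ne' p hp.ne_one
  have hdvd : ∀ ℓ, p ^ ℓ ∣ p ^ k * u ↔ ℓ ≤ k := by
    intro ℓ
    constructor
    · intro h
      have hc : (p ^ ℓ).Coprime u :=
        Nat.Coprime.pow_left _ ((Nat.Prime.coprime_iff_not_dvd hp).2 hu)
      exact (Nat.pow_dvd_pow_iff_le_right hp.one_lt).1 (hc.dvd_of_dvd_mul_right h)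
    · intro h
      exact (pow_dvd_pow p h).trans (dvd_mul_right _ _)
  have hset : (Finset.range (dd p + 1)).filter (fun ℓ => p ^ ℓ ∣ p ^ k * u) =
      Finset.range (min k (dd p) + 1) := by
    ext ℓ
    simp only [Finset.mem_filter, Finset.mem_range, hdvd]
    omega
  have hterm : ∀ ℓ ∈ Finset.range (min k (dd p) + 1),
      A p ℓ * (rad (p ^ ℓ) : ℂ) * a (p ^ k * u / p ^ ℓ) =
      (A p ℓ * (rad (p ^ ℓ) : ℂ) * a (p ^ (k - ℓ))) * a u := by
    intro ℓ hℓ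
    have hle : ℓ ≤ k := by
      rw [Finset.mem_range] at hℓ
      omega
    have : p ^ k * u / p ^ ℓ = p ^ (k - ℓ) * u := by
      apply Nat.div_eq_of_eq_mul_right (pow_pos hp.pos _)
      rw [← mul_assoc, ← pow_add, Nat.add_sub_cancel' hle]
    rw [this, hmul _ _ hu]
    ring
  rw [← Finset.sum_filter, hset, Finset.sum_congr rfl hterm, ← Finset.sum_mul, hmul _ _ hu,
    ← mul_assoc]
  congr 1
  have hrad : ∀ ℓ, rad (p ^ (ℓ + 1)) = p := by
    intro ℓ
    simp [rad, Nat.primeFactors_prime_pow (Nat.succ_ne_zero ℓ) hp]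
  rw [Finset.sum_range_succ']
  simp only [hrad]
  rcases Nat.eq_zero_or_pos k with rfl | hk
  · simp [hu, hA0, ha1, rad]
  · have h0 := hrec k hk
    rw [Finset.sum_range_succ'] at h0
    have hpk : p ∣ p ^ k * u := by simpa using (hdvd 1).2 hk
    rw [if_pos hpk]
    have h1 : ∑ ℓ ∈ Finset.range (min k (dd p)), A p (ℓ + 1) * (p : ℂ) * a (p ^ (k - (ℓ + 1))) =
        p * ∑ ℓ ∈ Finset.range (min k (dd p)), A p (ℓ + 1) * a (p ^ (k - (ℓ + 1))) := by
      rw [Finset.mul_sum]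
      exact Finset.sum_congr rfl fun _ _ => by ring
    rw [h1]
    simp only [hA0, pow_zero, Nat.sub_zero] at h0 ⊢
    simp only [rad, Nat.primeFactors_one, Finset.prod_empty, Nat.cast_one]
    linear_combination (p : ℂ) * h0

theorem sum_divisors_mul_of_coprime {M N : ℕ} (h : M.Coprime N) (F : ℕ → ℂ) :
    ∑ m ∈ (M * N).divisors, F m = ∑ m ∈ N.divisors, ∑ l ∈ M.divisors, F (l * m) := by
  rw [Nat.divisors_mul, Finset.mul_def, Finset.sum_image h.mul_injOn_divisors, Finset.sum_product_right]

theorem rad_mul {l m : ℕ} (h : l.Coprime m) : rad (l * m) = rad l * rad m := by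
  unfold rad
  rw [h.primeFactors_mul, Finset.prod_union h.disjoint_primeFactors]

theorem Bcoef_mul (A : ℕ → ℕ → ℂ) {l m : ℕ} (h : l.Coprime m) :
    Bcoef A (l * m) = Bcoef A l * Bcoef A m := by
  unfold Bcoef
  rw [h.primeFactors_mul, Finset.prod_union h.disjoint_primeFactors]
  congr 1
  · refine Finset.prod_congr rfl fun p hp => ?_
    rw [Nat.factorization_eq_of_coprime_left h (Nat.mem_primeFactors_iff_mem_primeFactorsList.1 hp)]
  · refine Finset.prod_congr rfl fun p hp => ?_
    rw [Nat.factorization_eq_of_coprime_right h (Nat.mem_primeFactors_iff_mem_primeFactorsList.1 hp)]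

theorem Bcoef_prime_pow {A : ℕ → ℕ → ℂ} {p : ℕ} (hp : p.Prime) (h0 : A p 0 = 1) (ℓ : ℕ) :
    Bcoef A (p ^ ℓ) = A p ℓ := by
  unfold Bcoef
  rcases Nat.eq_zero_or_pos ℓ with rfl | hℓ
  · simp [h0]
  · rw [Nat.primeFactors_prime_pow hℓ.ne' hp]
    simp [hp.factorization_self]

/-- The inner sum of the identity, stripped of its character values, over divisors supported on a
finite set `S` of primes. -/
theorem global_sum {a : ℕ → ℂ} (ha1 : a 1 = 1) {dd : ℕ → ℕ} {A : ℕ → ℕ → ℂ} {n : ℕ}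
    (hn : 0 < n) (S : Finset ℕ)
    (hS : ∀ p ∈ S, p.Prime ∧ SplitsPolynomiallyAt a dd A p) :
    ∑ m ∈ (∏ p ∈ S, p ^ dd p).divisors.filter (· ∣ n), Bcoef A m * (rad m : ℂ) * a (n / m) =
      (∏ p ∈ S, if p ∣ n then (1 - p : ℂ) else 1) * a n := by
  induction S using Finset.induction_on with
  | empty => simp [Finset.sum_filter, Bcoef, rad]
  | insert p S hpS ih =>
    obtain ⟨hp, hs⟩ := hS p (Finset.mem_insert_self p S)
    have hS' : ∀ q ∈ S, q.Prime ∧ SplitsPolynomiallyAt a dd A q :=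
      fun q hq => hS q (Finset.mem_insert_of_mem hq)
    have hcop : p.Coprime (∏ q ∈ S, q ^ dd q) := by
      refine Nat.Coprime.prod_right fun q hq => Nat.Coprime.pow_right _ ?_
      exact (Nat.coprime_primes hp (hS' q hq).1).2 (by rintro rfl; exact hpS hq)
    rw [Finset.prod_insert hpS, Finset.prod_insert hpS, mul_assoc, ← ih hS', Finset.sum_filter,
      sum_divisors_mul_of_coprime (Nat.Coprime.pow_left _ hcop), Finset.sum_filter, Finset.mul_sum]
    refine Finset.sum_congr rfl fun m hm => ?_
    have hpm : p.Coprime m := hcop.coprime_dvd_right (Nat.dvd_of_mem_divisors hm)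
    rw [Nat.sum_divisors_prime_pow hp]
    by_cases hmn : m ∣ n
    · obtain ⟨N, rfl⟩ := hmn
      have hm0 : 0 < m := Nat.pos_of_mul_pos_right hn
      have hN : 0 < N := Nat.pos_of_mul_pos_left hn
      have hpd : p ∣ m * N ↔ p ∣ N := hpm.dvd_mul_left
      have hloc := local_sum ha1 hp hs hN
      simp only [hpd, dvd_mul_right, if_true, Nat.mul_div_cancel_left _ hm0]
      have : ∀ x y z : ℂ, x * (y * z) = y * (x * z) := fun x y z => by ring
      rw [this, ← hloc, Finset.mul_sum]
      refine Finset.sum_congr rfl fun ℓ _ => ?_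
      have hpl : (p ^ ℓ).Coprime m := Nat.Coprime.pow_left _ hpm
      have hdvd : p ^ ℓ * m ∣ m * N ↔ p ^ ℓ ∣ N := by
        rw [mul_comm m N]
        exact Nat.mul_dvd_mul_iff_right hm0
      simp only [hdvd]
      split_ifs with h
      · rw [Bcoef_mul A hpl, rad_mul hpl, Bcoef_prime_pow hp hs.2.1, mul_comm m N,
          Nat.mul_div_mul_right _ _ hm0]
        push_cast
        ring
      · simp
    · have h1 : ∀ ℓ, ¬ p ^ ℓ * m ∣ n := fun ℓ h => hmn ((dvd_mul_left _ _).trans h)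
      simp [hmn, h1]

/-- Coefficientwise form of Lemma 3.3: for `D` squarefree, `(b,D)=1` and `a` splitting
polynomially at all `p | D`, for every `n ≥ 1`:
`a(n) e(-bn/D) = (1/φ(D)) ∑_{χ (mod D)} ∑_{m | (D/f_χ)*, m | n} B_m f(χ,m,b) χ*(n/m) a(n/m)`. -/
theorem coefficient_twist_identity
    (D : ℕ) (hD : 0 < D) (hsq : Squarefree D)
    (b : ℤ) (hb : b.gcd D = 1)
    (a : ℕ → ℂ) (ha1 : a 1 = 1)
    (dd : ℕ → ℕ) (A : ℕ → ℕ → ℂ)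
    (hsplit : ∀ p : ℕ, p.Prime → p ∣ D → SplitsPolynomiallyAt a dd A p)
    (n : ℕ) (hn : 0 < n) :
    a n * e (-((b : ℝ) * n) / D) =
      (D.totient : ℂ)⁻¹ *
        ∑ χ : DirichletCharacter ℂ D,
          ∑ m ∈ (Dstar (D / χ.conductor) dd).divisors.filter (· ∣ n),
            Bcoef A m * fChi χ m b *
              χ.primitiveCharacter (((n / m : ℕ) : ZMod χ.conductor)) * a (n / m) := by
  have hZ : (-((b : ℝ) * n) / D) = -(((b * n : ℤ) : ℝ) / D) := by
    push_cast
    ring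
  -- the minus sign is absorbed by conjugating the expansion of `e(bn/D)`
  rw [hZ, ← conj_e, e_eq_sum_characters hD, map_mul, map_inv₀, map_sum, Complex.conj_natCast,
    mul_left_comm, Finset.mul_sum]
  congr 1
  refine Finset.sum_congr rfl fun χ _ => ?_
  have hgD : D / χ.conductor ∣ D := Nat.div_dvd_of_dvd χ.conductor_dvd_level
  have hprime : ∀ p ∈ (D / χ.conductor).primeFactors,
      p.Prime ∧ SplitsPolynomiallyAt a dd A p := fun p hp =>
    ⟨Nat.prime_of_mem_primeFactors hp, hsplit p (Nat.prime_of_mem_primeFactors hp)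
      ((Nat.dvd_of_mem_primeFactors hp).trans hgD)⟩
  rw [sum_range_character hD hsq]
  -- the value `χ*(bm) χ*(n/m) = χ*(bn)` does not depend on `m`
  have hterm : ∀ m ∈ (Dstar (D / χ.conductor) dd).divisors.filter (· ∣ n),
      Bcoef A m * fChi χ m b *
        χ.primitiveCharacter (((n / m : ℕ) : ZMod χ.conductor)) * a (n / m) =
      (ArithmeticFunction.moebius (D / χ.conductor) : ℂ) *
        (starRingEnd ℂ) (gaussSumOf χ.primitiveCharacter) *
        (starRingEnd ℂ) (χ.primitiveCharacter (((D / χ.conductor : ℕ) : ZMod χ.conductor))) *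
        χ.primitiveCharacter ((b * n : ℤ) : ZMod χ.conductor) *
        (Bcoef A m * (rad m : ℂ) * a (n / m)) := by
    intro m hm
    obtain ⟨N, hN⟩ := (Finset.mem_filter.1 hm).2
    have hm0 : 0 < m := Nat.pos_of_ne_zero (by rintro rfl; omega)
    rw [hN, Nat.mul_div_cancel_left _ hm0]
    unfold fChi
    push_cast
    simp only [map_mul]
    ring
  rw [Finset.sum_congr rfl hterm, ← Finset.mul_sum]
  unfold Dstar
  rw [global_sum ha1 hn _ hprime]
  have hprod : ∏ p ∈ (D / χ.conductor).primeFactors,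
        (if (p : ℤ) ∣ b * n then (1 - p : ℂ) else 1) =
      ∏ p ∈ (D / χ.conductor).primeFactors, (if p ∣ n then (1 - p : ℂ) else 1) := by
    refine Finset.prod_congr rfl fun p hp => ?_
    have hpb : IsCoprime (p : ℤ) b := by
      refine IsCoprime.symm
        (IsCoprime.of_isCoprime_of_dvd_right (Int.isCoprime_iff_gcd_eq_one.2 hb) ?_)
      exact_mod_cast (Nat.dvd_of_mem_primeFactors hp).trans hgD
    have : (p : ℤ) ∣ b * n ↔ p ∣ n := by
      rw [← Int.natCast_dvd_natCast]
      exact ⟨hpb.dvd_of_dvd_mul_left, fun h => h.mul_left b⟩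
    simp only [this]
  have hconj : (starRingEnd ℂ) (∏ p ∈ (D / χ.conductor).primeFactors,
        (if p ∣ n then (1 - p : ℂ) else 1)) =
      ∏ p ∈ (D / χ.conductor).primeFactors, (if p ∣ n then (1 - p : ℂ) else 1) := by
    rw [map_prod]
    refine Finset.prod_congr rfl fun p _ => ?_
    split_ifs <;> simp
  rw [hprod]
  simp only [map_mul, hconj, Complex.conj_conj, map_intCast]
  ring
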